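/- arXiv:1812.06793 — 2 statements merged into one kernel-verified Lean document; each statement's English description precedes it below -/
import Mathlib

section
/- Let φ be a Bernstein function with representation φ(λ) = a + bλ + ∫_{(0,∞)} (1 − e^{−λs}) μ(ds). If −φ'' ∈ WUSC(β−2, C, x₀) for some C ≥ 1, x₀ ≥ 0 and β < 1, then for all x > x₀: φ'(x) ≤ (C/(1−β))·x·(−φ''(x)) + b. -/
open MeasureTheory Real Set

noncomputable section

/-- Weak upper scaling property at infinity. -/
def WUSC (f : ℝ → ℝ) (θ C x₀ : ℝ) : Prop :=
  ∀ lam : ℝ, 1 ≤ lam → ∀ x : ℝ, x₀ < x → f (lam * x) ≤ C * lam ^ θ * f x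

lemma aux_s_exp {r s : ℝ} (hr : 0 < r) (hs : 0 < s) :
    s * Real.exp (-r * s) ≤ (1 + 1 / r) * min 1 s := by
  have h1 : Real.exp (-r * s) ≤ 1 := Real.exp_le_one_iff.2 (by nlinarith)
  have h0 := Real.exp_pos (-r * s)
  have h2 : r * s * Real.exp (-r * s) ≤ 1 := by
    have h3 := Real.add_one_le_exp (r * s)
    have h4 : Real.exp (r * s) * Real.exp (-r * s) = 1 := by
      rw [← Real.exp_add]; simp
    nlinarith
  have hr' : 0 < 1 / r := by positivity
  have h5 : s * Real.exp (-r * s) ≤ 1 / r := by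
    rw [le_div_iff₀ hr]; nlinarith
  rcases le_total 1 s with h | h
  · rw [min_eq_left h]; linarith
  · rw [min_eq_right h]; nlinarith

lemma aux_s2_exp {r s : ℝ} (hr : 0 < r) (hs : 0 < s) :
    s ^ 2 * Real.exp (-r * s) ≤ ((2 / r) * (1 + 2 / r)) * min 1 s := by
  have h := aux_s_exp (half_pos hr) hs
  have hm : 0 < min 1 s := lt_min one_pos hs
  have h5 : s * Real.exp (-(r/2) * s) ≤ 2 / r := by
    have h3 := Real.add_one_le_exp (r/2 * s)
    have h4 : Real.exp (r/2 * s) * Real.exp (-(r/2) * s) = 1 := by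
      rw [← Real.exp_add]; simp
    have h0 := Real.exp_pos (-(r/2) * s)
    rw [le_div_iff₀ hr]; nlinarith
  have e : s ^ 2 * Real.exp (-r * s)
      = (s * Real.exp (-(r/2) * s)) * (s * Real.exp (-(r/2) * s)) := by
    have : Real.exp (-r * s) = Real.exp (-(r/2) * s) * Real.exp (-(r/2) * s) := by
      rw [← Real.exp_add]; congr 1; ring
    rw [this]; ring
  have e2 : 1 / (r / 2) = 2 / r := by field_simp
  rw [e2] at h
  rw [e, mul_assoc (2 / r)]
  exact mul_le_mul h5 h (by positivity) (by positivity)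

lemma aux_exp_mono {r y s : ℝ} (hry : r ≤ y) (hs : 0 < s) :
    Real.exp (-y * s) ≤ Real.exp (-r * s) := Real.exp_le_exp.2 (by nlinarith)

lemma aux_int {ν : Measure ℝ} (hν : ∀ᵐ s ∂ν, 0 < s) (hi : Integrable (fun s : ℝ => min 1 s) ν)
    {f : ℝ → ℝ} (hf : Continuous f) (K : ℝ) (h : ∀ s, 0 < s → |f s| ≤ K * min 1 s) :
    Integrable f ν := by
  refine (hi.const_mul K).mono' hf.aestronglyMeasurable ?_
  filter_upwards [hν] with s hs using h s hs

lemma aux_deriv1 {ν : Measure ℝ} (hν : ∀ᵐ s ∂ν, 0 < s)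
    (hi : Integrable (fun s : ℝ => min 1 s) ν) {x : ℝ} (hx : 0 < x) :
    HasDerivAt (fun y => ∫ s, (1 - Real.exp (-y * s)) ∂ν) (∫ s, s * Real.exp (-x * s) ∂ν) x := by
  refine (hasDerivAt_integral_of_dominated_loc_of_deriv_le
    (F := fun y s => 1 - Real.exp (-y * s)) (F' := fun y s => s * Real.exp (-y * s))
    (bound := fun s => (1 + 1 / (x/2)) * min 1 s) (s := Ioi (x/2))
    (Ioi_mem_nhds (by linarith)) ?_ ?_ ?_ ?_ (hi.const_mul _) ?_).2
  · exact Filter.Eventually.of_forall fun y => Continuous.aestronglyMeasurable (by fun_prop)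
  · refine aux_int hν hi (by fun_prop) (1 + x) ?_
    intro s hs
    have h1 : Real.exp (-x * s) ≤ 1 := Real.exp_le_one_iff.2 (by nlinarith)
    have h0 := Real.exp_pos (-x * s)
    have h3 := Real.add_one_le_exp (-x * s)
    rw [abs_of_nonneg (by linarith)]
    rcases le_total 1 s with h | h
    · rw [min_eq_left h]; linarith
    · rw [min_eq_right h]; nlinarith
  · exact Continuous.aestronglyMeasurable (by fun_prop)
  · filter_upwards [hν] with s hs y hy
    rw [Real.norm_eq_abs, abs_of_nonneg (by positivity)]
    exact (mul_le_mul_of_nonneg_left (aux_exp_mono (le_of_lt hy) hs) hs.le).trans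
      (aux_s_exp (half_pos hx) hs)
  · filter_upwards with s y hy
    have h : HasDerivAt (fun y : ℝ => -y * s) (-1 * s) y := (hasDerivAt_id y).neg.mul_const s
    have := (h.exp).const_sub 1
    exact this.congr_deriv (by ring)

lemma aux_deriv2 {ν : Measure ℝ} (hν : ∀ᵐ s ∂ν, 0 < s)
    (hi : Integrable (fun s : ℝ => min 1 s) ν) {x : ℝ} (hx : 0 < x) :
    HasDerivAt (fun y => ∫ s, s * Real.exp (-y * s) ∂ν) (∫ s, -(s ^ 2 * Real.exp (-x * s)) ∂ν) x := by
  refine (hasDerivAt_integral_of_dominated_loc_of_deriv_le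
    (F := fun y s => s * Real.exp (-y * s)) (F' := fun y s => -(s ^ 2 * Real.exp (-y * s)))
    (bound := fun s => ((2 / (x/2)) * (1 + 2 / (x/2))) * min 1 s) (s := Ioi (x/2))
    (Ioi_mem_nhds (by linarith)) ?_ ?_ ?_ ?_ (hi.const_mul _) ?_).2
  · exact Filter.Eventually.of_forall fun y => Continuous.aestronglyMeasurable (by fun_prop)
  · refine aux_int hν hi (by fun_prop) (1 + 1 / x) ?_
    intro s hs
    rw [abs_of_nonneg (by positivity)]
    exact aux_s_exp hx hs
  · exact Continuous.aestronglyMeasurable (by fun_prop)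
  · filter_upwards [hν] with s hs y hy
    rw [Real.norm_eq_abs, abs_neg, abs_of_nonneg (by positivity)]
    exact (mul_le_mul_of_nonneg_left (aux_exp_mono (le_of_lt hy) hs) (by positivity)).trans
      (aux_s2_exp (half_pos hx) hs)
  · filter_upwards with s y hy
    have h : HasDerivAt (fun y : ℝ => -y * s) (-1 * s) y := (hasDerivAt_id y).neg.mul_const s
    have := (h.exp).const_mul s
    exact this.congr_deriv (by ring)

lemma aux_lim {ν : Measure ℝ} (hν : ∀ᵐ s ∂ν, 0 < s)
    (hi : Integrable (fun s : ℝ => min 1 s) ν) :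
    Filter.Tendsto (fun y => ∫ s, s * Real.exp (-y * s) ∂ν) Filter.atTop (nhds 0) := by
  have := tendsto_integral_filter_of_dominated_convergence (μ := ν) (l := Filter.atTop)
    (F := fun (y : ℝ) s => s * Real.exp (-y * s)) (f := fun _ => (0:ℝ))
    (fun s => (1 + 1 / 1) * min 1 s) ?_ ?_ (hi.const_mul _) ?_
  · simpa using this
  · exact Filter.Eventually.of_forall fun y => Continuous.aestronglyMeasurable (by fun_prop)
  · filter_upwards [Filter.eventually_ge_atTop 1] with y hy
    filter_upwards [hν] with s hs
    rw [Real.norm_eq_abs, abs_of_nonneg (by positivity)]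
    exact (mul_le_mul_of_nonneg_left (aux_exp_mono hy hs) hs.le).trans
      (aux_s_exp one_pos hs)
  · filter_upwards [hν] with s hs
    have h1 : Filter.Tendsto (fun y : ℝ => -y * s) Filter.atTop Filter.atBot :=
      Filter.tendsto_neg_atTop_atBot.atBot_mul_const hs
    simpa using (Real.tendsto_exp_atBot.comp h1).const_mul s

/-- If `φ` is a Bernstein function with representation
`φ(λ) = a + bλ + ∫ (1 − e^{−λs}) μ(ds)` and `−φ'' ∈ WUSC(β−2, C, x₀)` with `β < 1`,
then `φ'(x) ≤ (C/(1−β)) x (−φ''(x)) + b` for all `x > x₀`. -/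
theorem bernstein_deriv_upper_bound_of_wusc
    (φ : ℝ → ℝ) (a b : ℝ) (μ : Measure ℝ) (β C x₀ : ℝ)
    (ha : 0 ≤ a) (hb : 0 ≤ b)
    (hμfin : ∫⁻ s in Ioi (0:ℝ), ENNReal.ofReal (min 1 s) ∂μ ≠ ⊤)
    (hφ : ∀ x : ℝ, 0 < x →
      φ x = a + b * x + ∫ s in Ioi (0:ℝ), (1 - Real.exp (-x * s)) ∂μ)
    (hβ : β < 1) (hC : 1 ≤ C) (hx₀ : 0 ≤ x₀)
    (hscal : WUSC (fun x => -(deriv (deriv φ) x)) (β - 2) C x₀) :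
    ∀ x : ℝ, x₀ < x →
      deriv φ x ≤ C / (1 - β) * (x * -(deriv (deriv φ) x)) + b := by
  intro x hx
  have hx0 : 0 < x := lt_of_le_of_lt hx₀ hx
  have hν : ∀ᵐ s ∂(μ.restrict (Ioi (0:ℝ))), 0 < s := ae_restrict_mem measurableSet_Ioi
  have hi : Integrable (fun s : ℝ => min 1 s) (μ.restrict (Ioi (0:ℝ))) := by
    refine ⟨Continuous.aestronglyMeasurable (by fun_prop), ?_⟩
    rw [hasFiniteIntegral_iff_ofReal]
    · exact lt_top_iff_ne_top.2 hμfin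
    · filter_upwards [hν] with s hs using (lt_min one_pos hs).le
  set G : ℝ → ℝ := fun y => ∫ s in Ioi (0:ℝ), s * Real.exp (-y * s) ∂μ with hG
  have d1 : ∀ y, 0 < y → deriv φ y = b + G y := by
    intro y hy
    have h : HasDerivAt (fun y => a + b * y + ∫ s in Ioi (0:ℝ), (1 - Real.exp (-y * s)) ∂μ)
        (b * 1 + G y) y :=
      (((hasDerivAt_id y).const_mul b).const_add a).add (aux_deriv1 hν hi hy)
    rw [mul_one] at h
    refine (h.congr_of_eventuallyEq ?_).deriv
    filter_upwards [Ioi_mem_nhds hy] with z hz using hφ z hz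
  have d2 : ∀ y, 0 < y → HasDerivAt G (deriv (deriv φ) y) y := by
    intro y hy
    have h := aux_deriv2 hν hi hy
    have h2 : HasDerivAt (deriv φ) (∫ s in Ioi (0:ℝ), -(s ^ 2 * Real.exp (-y * s)) ∂μ) y := by
      refine (h.const_add b).congr_of_eventuallyEq ?_
      filter_upwards [Ioi_mem_nhds hy] with z hz using d1 z hz
    rw [h2.deriv]; exact h
  set A := -(deriv (deriv φ) x) with hA
  have hβ' : 0 < 1 - β := by linarith
  set M := C * A * x ^ (2 - β) / (1 - β) with hM
  have dH : ∀ y, 0 < y → HasDerivAt (fun t => G t - M * t ^ (β - 1))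
      (deriv (deriv φ) y - M * ((β - 1) * y ^ (β - 1 - 1))) y := fun y hy =>
    (d2 y hy).sub ((Real.hasDerivAt_rpow_const (Or.inl hy.ne')).const_mul M)
  have hmono : MonotoneOn (fun t => G t - M * t ^ (β - 1)) (Ici x) := by
    refine monotoneOn_of_deriv_nonneg (convex_Ici x) ?_ ?_ ?_
    · exact fun y hy => (dH y (hx0.trans_le hy)).continuousAt.continuousWithinAt
    · rw [interior_Ici]
      exact fun y hy => (dH y (hx0.trans hy)).differentiableAt.differentiableWithinAt
    · rw [interior_Ici]
      intro y hy
      have hy0 : 0 < y := hx0.trans hy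
      rw [(dH y hy0).deriv]
      have h := hscal (y / x) ((one_le_div hx0).2 (le_of_lt hy)) x hx
      simp only [div_mul_cancel₀ y hx0.ne'] at h
      rw [Real.div_rpow hy0.le hx0.le] at h
      have e1 : x ^ (2 - β) = (x ^ (β - 2))⁻¹ := by
        rw [← Real.rpow_neg hx0.le]; congr 1; ring
      have e2 : M * ((β - 1) * y ^ (β - 1 - 1)) = -(C * (y ^ (β - 2) / x ^ (β - 2)) * A) := by
        rw [hM, e1, show β - 1 - 1 = β - 2 by ring]
        have : x ^ (β - 2) ≠ 0 := (Real.rpow_pos_of_pos hx0 _).ne'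
        field_simp
        ring
      rw [e2]
      linarith
  have hlim : Filter.Tendsto (fun t => G t - M * t ^ (β - 1)) Filter.atTop (nhds 0) := by
    have h := tendsto_rpow_neg_atTop hβ'
    rw [neg_sub] at h
    have h2 := (aux_lim hν hi).sub (h.const_mul M)
    rw [mul_zero, sub_zero] at h2
    exact h2
  have key : G x - M * x ^ (β - 1) ≤ 0 := by
    refine ge_of_tendsto hlim ?_
    filter_upwards [Filter.eventually_ge_atTop x] with t ht
    exact hmono (mem_Ici.2 le_rfl) ht ht
  have e : M * x ^ (β - 1) = C / (1 - β) * (x * A) := by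
    have : x ^ (2 - β) * x ^ (β - 1) = x := by
      rw [← Real.rpow_add hx0]; ring_nf; simp
    calc M * x ^ (β - 1) = C / (1 - β) * ((x ^ (2 - β) * x ^ (β - 1)) * A) := by rw [hM]; ring
      _ = _ := by rw [this]
  rw [d1 x hx0]
  linarith
end
end

section
/- Let φ(λ) = bλ + ∫_{(0,∞)} (1 − e^{−λs}) ν(ds) be the Laplace exponent of a subordinator with Lévy measure ν. Suppose there are x₀ ≥ 0, C ≥ 1 and α > 0 such that ν((r,∞)) ≤ C·λ^α·ν((λr,∞)) for all 0 < r < 1/x₀ (all r > 0 if x₀ = 0) and all 0 < λ ≤ 1. Then −φ'' ∈ WLSC(α−2, c, x₀) for some c ∈ (0,1]. -/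
open MeasureTheory Real Set

noncomputable section

/-- Weak lower scaling property at infinity. -/
def WLSC (f : ℝ → ℝ) (θ c x₀ : ℝ) : Prop :=
  ∀ lam : ℝ, 1 ≤ lam → ∀ x : ℝ, x₀ < x → c * lam ^ θ * f x ≤ f (lam * x)

lemma aux_one_sub (y s : ℝ) (hy : 0 ≤ y) (hs : 0 < s) :
    ‖1 - Real.exp (-y * s)‖ ≤ (1 + y) * min 1 s := by
  have h1 : Real.exp (-y * s) ≤ 1 := by
    apply Real.exp_le_one_iff.2
    nlinarith [mul_nonneg hy hs.le]
  have h2 := Real.add_one_le_exp (-y * s)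
  have h3 := Real.exp_pos (-y * s)
  rw [Real.norm_of_nonneg (by linarith)]
  rcases le_total 1 s with h | h
  · rw [min_eq_left h]; nlinarith
  · rw [min_eq_right h]; nlinarith

lemma aux_exp_bounds (a s : ℝ) (ha : 0 < a) (hs : 0 < s) :
    s * Real.exp (-a * s) ≤ (1 + 1 / a) * min 1 s ∧
    s ^ 2 * Real.exp (-a * s) ≤ (1 / a + 2 / a ^ 2) * min 1 s := by
  have has : 0 < a * s := mul_pos ha hs
  have hE := Real.exp_pos (-a * s)
  have hE1 : Real.exp (-a * s) ≤ 1 := Real.exp_le_one_iff.2 (by linarith)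
  have hq := Real.quadratic_le_exp_of_nonneg has.le
  have hmul : Real.exp (a * s) * Real.exp (-a * s) = 1 := by
    rw [← Real.exp_add]; simp
  have b1 : (a * s) * Real.exp (-a * s) ≤ 1 := by
    rw [← hmul]; gcongr; nlinarith
  have b2 : (a * s) ^ 2 * Real.exp (-a * s) ≤ 2 := by
    have : (a * s) ^ 2 * Real.exp (-a * s) ≤ (2 * Real.exp (a * s)) * Real.exp (-a * s) := by
      gcongr; nlinarith
    linarith
  have c1 : s * Real.exp (-a * s) ≤ 1 / a := by
    rw [le_div_iff₀ ha]; linarith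
  have c2 : s ^ 2 * Real.exp (-a * s) ≤ 2 / a ^ 2 := by
    rw [le_div_iff₀ (by positivity)]; nlinarith
  have ia : 0 < 1 / a := by positivity
  have ia2 : 0 < 2 / a ^ 2 := by positivity
  rcases le_total 1 s with h | h
  · rw [min_eq_left h]; constructor <;> linarith
  · rw [min_eq_right h]; constructor <;> nlinarith

lemma aux_deriv2_s17 (φ : ℝ → ℝ) (b : ℝ) (ν : Measure ℝ)
    (hνfin : ∫⁻ s in Ioi (0:ℝ), ENNReal.ofReal (min 1 s) ∂ν ≠ ⊤)
    (hφ : ∀ lam : ℝ, 0 ≤ lam →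
      φ lam = b * lam + ∫ s in Ioi (0:ℝ), (1 - Real.exp (-lam * s)) ∂ν)
    (x : ℝ) (hx : 0 < x) :
    Integrable (fun s => s ^ 2 * Real.exp (-x * s)) (ν.restrict (Ioi 0)) ∧
    -(deriv (deriv φ) x) = ∫ s in Ioi (0:ℝ), s ^ 2 * Real.exp (-x * s) ∂ν := by
  set μ := ν.restrict (Ioi 0) with hμ
  have hpos : ∀ᵐ s ∂μ, 0 < s := ae_restrict_mem measurableSet_Ioi
  have hmin : Integrable (fun s : ℝ => min 1 s) μ := by
    refine ⟨by fun_prop, ?_⟩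
    rw [hasFiniteIntegral_iff_ofReal]
    · exact lt_top_iff_ne_top.2 hνfin
    · filter_upwards [hpos] with s hs
      exact le_min zero_le_one hs.le
  have hI0 : ∀ y : ℝ, 0 < y → Integrable (fun s => 1 - Real.exp (-y * s)) μ := by
    intro y hy
    refine (hmin.const_mul (1 + y)).mono' (by fun_prop) ?_
    filter_upwards [hpos] with s hs using aux_one_sub y s hy.le hs
  have hI1 : ∀ y : ℝ, 0 < y → Integrable (fun s => s * Real.exp (-y * s)) μ := by
    intro y hy
    refine (hmin.const_mul (1 + 1 / y)).mono' (by fun_prop) ?_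
    filter_upwards [hpos] with s hs
    rw [Real.norm_of_nonneg (by positivity)]
    exact (aux_exp_bounds y s hy hs).1
  have hI2 : ∀ y : ℝ, 0 < y → Integrable (fun s => s ^ 2 * Real.exp (-y * s)) μ := by
    intro y hy
    refine (hmin.const_mul (1 / y + 2 / y ^ 2)).mono' (by fun_prop) ?_
    filter_upwards [hpos] with s hs
    rw [Real.norm_of_nonneg (by positivity)]
    exact (aux_exp_bounds y s hy hs).2
  have hd1 : ∀ y : ℝ, 0 < y → HasDerivAt φ (b + ∫ s, s * Real.exp (-y * s) ∂μ) y := by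
    intro y hy
    have key := (hasDerivAt_integral_of_dominated_loc_of_deriv_le (μ := μ)
      (F := fun y s => 1 - Real.exp (-y * s)) (F' := fun y s => s * Real.exp (-y * s))
      (x₀ := y) (s := Ioi (y / 2)) (bound := fun s => s * Real.exp (-(y / 2) * s))
      (Ioi_mem_nhds (by linarith))
      (Filter.Eventually.of_forall fun z => by fun_prop) (hI0 y hy) (by fun_prop)
      (by
        filter_upwards [hpos] with s hs z hz
        rw [Real.norm_of_nonneg (by positivity)]
        have : y / 2 < z := hz
        gcongr)
      (hI1 _ (by linarith))
      (by
        filter_upwards [hpos] with s hs z hz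
        have h := ((((hasDerivAt_id z).neg).mul_const s).exp).const_sub 1
        simp only [id, Pi.neg_apply] at h
        convert h using 1
        ring)).2
    have h2 : HasDerivAt (fun y => b * y) b y := by
      simpa using (hasDerivAt_id y).const_mul b
    refine (h2.add key).congr_of_eventuallyEq ?_
    filter_upwards [Ioi_mem_nhds hy] with z hz
    exact hφ z (le_of_lt hz)
  have hd2 : HasDerivAt (deriv φ) (∫ s, -(s ^ 2 * Real.exp (-x * s)) ∂μ) x := by
    have key := (hasDerivAt_integral_of_dominated_loc_of_deriv_le (μ := μ)
      (F := fun y s => s * Real.exp (-y * s)) (F' := fun y s => -(s ^ 2 * Real.exp (-y * s)))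
      (x₀ := x) (s := Ioi (x / 2)) (bound := fun s => s ^ 2 * Real.exp (-(x / 2) * s))
      (Ioi_mem_nhds (by linarith))
      (Filter.Eventually.of_forall fun z => by fun_prop) (hI1 x hx) (by fun_prop)
      (by
        filter_upwards [hpos] with s hs z hz
        rw [norm_neg, Real.norm_of_nonneg (by positivity)]
        have : x / 2 < z := hz
        gcongr)
      (hI2 _ (by linarith))
      (by
        filter_upwards [hpos] with s hs z hz
        have h := ((((hasDerivAt_id z).neg).mul_const s).exp).const_mul s
        simp only [id, Pi.neg_apply] at h
        exact h.congr_deriv (by ring))).2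
    refine (key.const_add b).congr_of_eventuallyEq ?_
    filter_upwards [Ioi_mem_nhds hx] with z hz
    exact (hd1 z hz).deriv
  refine ⟨hI2 x hx, ?_⟩
  rw [hd2.deriv, integral_neg, neg_neg]

/-- Scaling for the truncated second moment. -/
lemma aux_H_scaling (ν : Measure ℝ) (α C x₀ : ℝ)
    (htail : ∀ r : ℝ, 0 < r → r * x₀ < 1 → ∀ lam : ℝ, 0 < lam → lam ≤ 1 →
      ν (Ioi r) ≤ ENNReal.ofReal (C * lam ^ α) * ν (Ioi (lam * r)))
    (hx₀ : 0 ≤ x₀) (x lam : ℝ) (hx : x₀ < x) (hlam : 1 ≤ lam) :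
    ∫⁻ s in Ioi (0:ℝ), ENNReal.ofReal ((min 1 (x * s)) ^ 2) ∂ν ≤
      ENNReal.ofReal (C * (lam⁻¹) ^ α) *
        ∫⁻ s in Ioi (0:ℝ), ENNReal.ofReal ((min 1 (lam * x * s)) ^ 2) ∂ν := by
  have hxp : 0 < x := lt_of_le_of_lt hx₀ hx
  have hset : ∀ y : ℝ, 0 < y → ∀ t : ℝ, 0 < t → t < 1 →
      (ν.restrict (Ioi 0)) {s | t < (min 1 (y * s)) ^ 2} = ν (Ioi (√t / y)) := by
    intro y hy t ht ht1
    rw [Measure.restrict_apply (measurableSet_lt (by fun_prop) (by fun_prop))]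
    congr 1
    ext s
    simp only [mem_inter_iff, mem_ofPred_eq, mem_Ioi]
    have h1 : √t < 1 := by rw [Real.sqrt_lt' one_pos]; simpa
    constructor
    · rintro ⟨h, hs⟩
      have hm : 0 < min 1 (y * s) := lt_min one_pos (mul_pos hy hs)
      have := (Real.sqrt_lt' hm).2 h
      rw [div_lt_iff₀ hy]
      have := lt_of_lt_of_le this (min_le_right _ _)
      linarith
    · intro h
      have hs : 0 < s := lt_of_le_of_lt (by positivity) h
      refine ⟨?_, hs⟩
      have hm : 0 < min 1 (y * s) := lt_min one_pos (mul_pos hy hs)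
      rw [← Real.sqrt_lt' hm]
      rw [div_lt_iff₀ hy] at h
      exact lt_min h1 (by linarith)
  rw [lintegral_eq_lintegral_meas_lt _ (Filter.Eventually.of_forall fun s => sq_nonneg _)
      (by fun_prop),
    lintegral_eq_lintegral_meas_lt _ (Filter.Eventually.of_forall fun s => sq_nonneg _)
      (by fun_prop), ← lintegral_const_mul' _ _ ENNReal.ofReal_ne_top]
  refine setLIntegral_mono' measurableSet_Ioi ?_
  intro t ht
  have ht : 0 < t := ht
  rcases lt_or_ge t 1 with ht1 | ht1
  · rw [hset x hxp t ht ht1, hset (lam * x) (by positivity) t ht ht1]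
    have h1 : √t < 1 := by rw [Real.sqrt_lt' one_pos]; simpa
    have h0 : 0 < √t := Real.sqrt_pos.2 ht
    have := htail (√t / x) (by positivity)
      (by rw [div_mul_eq_mul_div, div_lt_one hxp]; nlinarith) lam⁻¹ (by positivity)
      (inv_le_one_of_one_le₀ hlam)
    have e : lam⁻¹ * (√t / x) = √t / (lam * x) := by field_simp
    rwa [e] at this
  · have : (ν.restrict (Ioi 0)) {s | t < (min 1 (x * s)) ^ 2} = 0 := by
      rw [Measure.restrict_apply (measurableSet_lt (by fun_prop) (by fun_prop))]
      convert measure_empty (μ := ν)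
      ext s
      simp only [mem_inter_iff, mem_ofPred_eq, mem_Ioi, mem_empty_iff_false, iff_false, not_and]
      intro h hs
      have hm : 0 < min 1 (x * s) := lt_min one_pos (mul_pos hxp hs)
      have := min_le_left 1 (x * s)
      nlinarith
    rw [this]; exact zero_le

lemma aux_H_le_G (ν : Measure ℝ) (α C x₀ ρ : ℝ)
    (hνfin : ∫⁻ s in Ioi (0:ℝ), ENNReal.ofReal (min 1 s) ∂ν ≠ ⊤)
    (htail : ∀ r : ℝ, 0 < r → r * x₀ < 1 → ∀ lam : ℝ, 0 < lam → lam ≤ 1 →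
      ν (Ioi r) ≤ ENNReal.ofReal (C * lam ^ α) * ν (Ioi (lam * r)))
    (hx₀ : 0 ≤ x₀) (hρ : 0 < ρ) (hρ1 : ρ ≤ 1) (hCρ : C * ρ ^ α ≤ 1 / 2)
    (y : ℝ) (hy : x₀ < y) :
    ∫⁻ s in Ioi (0:ℝ), ENNReal.ofReal ((min 1 (y * s)) ^ 2) ∂ν ≤
      ENNReal.ofReal (Real.exp 1 * (1 + (ρ ^ 2)⁻¹)) *
        ∫⁻ s in Ioi (0:ℝ), ENNReal.ofReal ((y * s) ^ 2 * Real.exp (-y * s)) ∂ν := by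
  have hyp : 0 < y := lt_of_le_of_lt hx₀ hy
  set μ := ν.restrict (Ioi 0) with hμ
  set G := ∫⁻ s, ENNReal.ofReal ((y * s) ^ 2 * Real.exp (-y * s)) ∂μ with hG
  have hfin : ∀ r : ℝ, 0 < r → ν (Ioi r) ≠ ⊤ := by
    intro r hr htop
    apply hνfin
    rw [eq_top_iff]
    calc (⊤ : ENNReal) = ENNReal.ofReal (min 1 r) * ν (Ioi r) := by
          rw [htop, ENNReal.mul_top]
          simp [hr]
      _ = ∫⁻ s in Ioi r, ENNReal.ofReal (min 1 r) ∂ν := by rw [setLIntegral_const]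
      _ ≤ ∫⁻ s in Ioi r, ENNReal.ofReal (min 1 s) ∂ν := by
          refine setLIntegral_mono' measurableSet_Ioi fun s hs => ?_
          have : r < s := hs
          gcongr
      _ ≤ _ := lintegral_mono_set (Ioi_subset_Ioi hr.le)
  have hexp : ∀ s : ℝ, s ≤ 1 / y → 1 ≤ Real.exp 1 * Real.exp (-y * s) := by
    intro s hs
    rw [← Real.exp_add, Real.one_le_exp_iff]
    rw [le_div_iff₀ hyp] at hs
    linarith
  have hN : ν (Ioi (1 / y)) ≤ ν (Ioc (ρ / y) (1 / y)) := by
    have h1 := htail (1 / y) (by positivity)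
      (by rw [div_mul_eq_mul_div, div_lt_one hyp]; linarith) ρ hρ hρ1
    have h2 : ν (Ioi (ρ * (1 / y))) = ν (Ioc (ρ / y) (1 / y)) + ν (Ioi (1 / y)) := by
      rw [← measure_union _ measurableSet_Ioi, Ioc_union_Ioi_eq_Ioi (by gcongr)]
      · congr 2; ring
      · rw [Set.disjoint_left]; intro a ha hb; exact absurd ha.2 (not_le.2 hb)
    rw [h2] at h1
    have h3 : ν (Ioi (1 / y)) ≤ ENNReal.ofReal (1 / 2) *
        (ν (Ioc (ρ / y) (1 / y)) + ν (Ioi (1 / y))) := h1.trans (by gcongr)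
    have h4 : ν (Ioi (1 / y)) + ν (Ioi (1 / y)) ≤
        ν (Ioc (ρ / y) (1 / y)) + ν (Ioi (1 / y)) := by
      calc ν (Ioi (1 / y)) + ν (Ioi (1 / y)) = ENNReal.ofReal 2 * ν (Ioi (1 / y)) := by
            rw [← two_mul]; simp
        _ ≤ ENNReal.ofReal 2 * (ENNReal.ofReal (1 / 2) *
              (ν (Ioc (ρ / y) (1 / y)) + ν (Ioi (1 / y)))) := by gcongr
        _ = _ := by
            rw [← mul_assoc, ← ENNReal.ofReal_mul (by norm_num)]; norm_num
    exact (ENNReal.add_le_add_iff_right (hfin _ (by positivity))).1 h4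
  have hIoc : ν (Ioc (ρ / y) (1 / y)) ≤ ENNReal.ofReal (Real.exp 1 * (ρ ^ 2)⁻¹) * G := by
    have hsub : Ioc (ρ / y) (1 / y) ⊆ Ioi 0 := fun s hs =>
      lt_of_le_of_lt (by positivity) hs.1
    rw [hG, ← lintegral_const_mul' _ _ ENNReal.ofReal_ne_top]
    calc ν (Ioc (ρ / y) (1 / y)) = ∫⁻ s in Ioc (ρ / y) (1 / y), 1 ∂ν := by simp
      _ ≤ ∫⁻ s in Ioc (ρ / y) (1 / y), ENNReal.ofReal (Real.exp 1 * (ρ ^ 2)⁻¹) *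
            ENNReal.ofReal ((y * s) ^ 2 * Real.exp (-y * s)) ∂ν := by
          refine setLIntegral_mono' measurableSet_Ioc fun s hs => ?_
          rw [← ENNReal.ofReal_mul (by positivity), ← ENNReal.ofReal_one]
          apply ENNReal.ofReal_le_ofReal
          have h1 := hexp s hs.2
          have h2 : ρ < y * s := by have := hs.1; rw [div_lt_iff₀ hyp] at this; linarith
          have h3 : 1 ≤ (ρ ^ 2)⁻¹ * (y * s) ^ 2 := by
            rw [inv_mul_eq_div, le_div_iff₀ (by positivity), one_mul]; gcongr
          calc (1:ℝ) ≤ ((ρ ^ 2)⁻¹ * (y * s) ^ 2) * (Real.exp 1 * Real.exp (-y * s)) :=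
                one_le_mul_of_one_le_of_one_le h3 h1
            _ = _ := by ring
      _ ≤ _ := lintegral_mono_set hsub
  have hsplit : ∫⁻ s, ENNReal.ofReal ((min 1 (y * s)) ^ 2) ∂μ ≤
      ∫⁻ s, (ENNReal.ofReal (Real.exp 1) * ENNReal.ofReal ((y * s) ^ 2 * Real.exp (-y * s))
        + (Ioi (1 / y)).indicator 1 s) ∂μ := by
    refine setLIntegral_mono' measurableSet_Ioi fun s hs => ?_
    have hs : 0 < s := hs
    have hm : 0 < min 1 (y * s) := lt_min one_pos (mul_pos hyp hs)
    rcases le_or_gt s (1 / y) with h | h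
    · refine le_trans ?_ le_self_add
      rw [← ENNReal.ofReal_mul (by positivity)]
      apply ENNReal.ofReal_le_ofReal
      have h1 := hexp s h
      calc (min 1 (y * s)) ^ 2 ≤ (y * s) ^ 2 := by gcongr; exact min_le_right _ _
        _ ≤ (y * s) ^ 2 * (Real.exp 1 * Real.exp (-y * s)) := le_mul_of_one_le_right (sq_nonneg _) h1
        _ = _ := by ring
    · refine le_trans ?_ le_add_self
      rw [indicator_of_mem (by exact h), Pi.one_apply, ← ENNReal.ofReal_one]
      apply ENNReal.ofReal_le_ofReal
      exact pow_le_one₀ hm.le (min_le_left _ _)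
  calc _ ≤ _ := hsplit
    _ = ENNReal.ofReal (Real.exp 1) * G + μ (Ioi (1 / y)) := by
        rw [lintegral_add_right _ (measurable_one.indicator measurableSet_Ioi),
          lintegral_const_mul' _ _ ENNReal.ofReal_ne_top, lintegral_indicator_one measurableSet_Ioi]
    _ ≤ ENNReal.ofReal (Real.exp 1) * G + ENNReal.ofReal (Real.exp 1 * (ρ ^ 2)⁻¹) * G := by
        gcongr
        exact (Measure.restrict_apply_le _ _).trans (hN.trans hIoc)
    _ = _ := by
        rw [← add_mul, ← ENNReal.ofReal_add (by positivity) (by positivity)]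
        congr 2; ring

/-- If the tail of the Lévy measure satisfies
`ν((r,∞)) ≤ C λ^α ν((λr,∞))` for all `0 < r < 1/x₀` and `0 < λ ≤ 1`, then
`−φ'' ∈ WLSC(α−2, c, x₀)` for some `c ∈ (0,1]`. -/
theorem tail_scaling_implies_wlsc_second_deriv
    (φ : ℝ → ℝ) (b : ℝ) (ν : Measure ℝ) (α C x₀ : ℝ)
    (hb : 0 ≤ b)
    (hνfin : ∫⁻ s in Ioi (0:ℝ), ENNReal.ofReal (min 1 s) ∂ν ≠ ⊤)
    (hφ : ∀ lam : ℝ, 0 ≤ lam →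
      φ lam = b * lam + ∫ s in Ioi (0:ℝ), (1 - Real.exp (-lam * s)) ∂ν)
    (hα : 0 < α) (hC : 1 ≤ C) (hx₀ : 0 ≤ x₀)
    (htail : ∀ r : ℝ, 0 < r → r * x₀ < 1 → ∀ lam : ℝ, 0 < lam → lam ≤ 1 →
      ν (Ioi r) ≤ ENNReal.ofReal (C * lam ^ α) * ν (Ioi (lam * r))) :
    ∃ c : ℝ, 0 < c ∧ c ≤ 1 ∧
      WLSC (fun x => -(deriv (deriv φ) x)) (α - 2) c x₀ := by
  set ρ : ℝ := (1 / (2 * C)) ^ (1 / α) with hρdef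
  have hCpos : 0 < C := by linarith
  have hρ : 0 < ρ := by positivity
  have hρ1 : ρ ≤ 1 := by
    apply Real.rpow_le_one (by positivity) _ (by positivity)
    rw [div_le_one (by positivity)]; linarith
  have hCρ : C * ρ ^ α ≤ 1 / 2 := by
    rw [hρdef, ← Real.rpow_mul (by positivity), one_div_mul_cancel hα.ne', Real.rpow_one]
    apply le_of_eq; field_simp
  set M : ℝ := 2 * C * (Real.exp 1 * (1 + (ρ ^ 2)⁻¹)) with hM
  have hMpos : 0 < M := by positivity
  refine ⟨min 1 M⁻¹, by positivity, min_le_left _ _, ?_⟩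
  intro lam hlam x hx
  have hxp : 0 < x := lt_of_le_of_lt hx₀ hx
  have hlp : 0 < lam := by linarith
  have hy : x₀ < lam * x := by nlinarith
  have hyp : 0 < lam * x := by positivity
  obtain ⟨hi1, he1⟩ := aux_deriv2_s17 φ b ν hνfin hφ x hxp
  obtain ⟨hi2, he2⟩ := aux_deriv2_s17 φ b ν hνfin hφ (lam * x) hyp
  simp only [he1, he2]
  have hG : ∀ y : ℝ, Integrable (fun s => s ^ 2 * Real.exp (-y * s)) (ν.restrict (Ioi 0)) →
      ∫⁻ s in Ioi (0:ℝ), ENNReal.ofReal ((y * s) ^ 2 * Real.exp (-y * s)) ∂ν =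
        ENNReal.ofReal (y ^ 2 * ∫ s in Ioi (0:ℝ), s ^ 2 * Real.exp (-y * s) ∂ν) := by
    intro y hi
    rw [← integral_const_mul, ofReal_integral_eq_lintegral_ofReal (hi.const_mul _)
      (Filter.Eventually.of_forall fun s => by positivity)]
    congr 1; ext s; congr 1; ring
  have hf : ∀ y : ℝ, 0 ≤ ∫ s in Ioi (0:ℝ), s ^ 2 * Real.exp (-y * s) ∂ν := fun y =>
    integral_nonneg fun s => by positivity
  set F1 := ∫ s in Ioi (0:ℝ), s ^ 2 * Real.exp (-x * s) ∂ν with hF1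
  set F2 := ∫ s in Ioi (0:ℝ), s ^ 2 * Real.exp (-(lam * x) * s) ∂ν with hF2
  have hF1n : 0 ≤ F1 := hf x
  have hF2n : 0 ≤ F2 := hf (lam * x)
  have hA : ENNReal.ofReal (x ^ 2 * F1) ≤ ENNReal.ofReal 2 *
      ∫⁻ s in Ioi (0:ℝ), ENNReal.ofReal ((min 1 (x * s)) ^ 2) ∂ν := by
    rw [← hG x hi1, ← lintegral_const_mul' _ _ ENNReal.ofReal_ne_top]
    refine setLIntegral_mono' measurableSet_Ioi fun s hs => ?_
    have hs : 0 < s := hs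
    rw [← ENNReal.ofReal_mul (by norm_num)]
    apply ENNReal.ofReal_le_ofReal
    have hxs : 0 < x * s := by positivity
    have h1 : Real.exp (-x * s) ≤ 1 := Real.exp_le_one_iff.2 (by linarith)
    have hq := Real.quadratic_le_exp_of_nonneg hxs.le
    have hmul : Real.exp (x * s) * Real.exp (-x * s) = 1 := by
      rw [← Real.exp_add]; simp
    rcases le_total 1 (x * s) with h | h
    · rw [min_eq_left h]
      have : (x * s) ^ 2 * Real.exp (-x * s) ≤ (2 * Real.exp (x * s)) * Real.exp (-x * s) := by
        gcongr; nlinarith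
      linarith
    · rw [min_eq_right h]
      nlinarith [sq_nonneg (x * s)]
  have hB := aux_H_scaling ν α C x₀ htail hx₀ x lam hx hlam
  have hD := aux_H_le_G ν α C x₀ ρ hνfin htail hx₀ hρ hρ1 hCρ (lam * x) hy
  rw [hG _ hi2] at hD
  have hE : ENNReal.ofReal (x ^ 2 * F1) ≤ ENNReal.ofReal (M * lam⁻¹ ^ α * ((lam * x) ^ 2 * F2)) := by
    calc _ ≤ _ := hA
      _ ≤ ENNReal.ofReal 2 * (ENNReal.ofReal (C * (lam⁻¹) ^ α) *
          (ENNReal.ofReal (Real.exp 1 * (1 + (ρ ^ 2)⁻¹)) *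
            ENNReal.ofReal ((lam * x) ^ 2 * F2))) := by
          gcongr
          exact hB.trans (by gcongr)
      _ = _ := by
          rw [← ENNReal.ofReal_mul (by positivity), ← ENNReal.ofReal_mul (by positivity),
            ← ENNReal.ofReal_mul (by positivity)]
          congr 1; rw [hM]; ring
  rw [ENNReal.ofReal_le_ofReal_iff (by positivity)] at hE
  have hlα : 0 < lam ^ α := by positivity
  have hF : F1 ≤ M * lam⁻¹ ^ α * (lam ^ 2 * F2) := by
    have hx2 : 0 < x ^ 2 := by positivity
    refine le_of_mul_le_mul_left (hE.trans (le_of_eq ?_)) hx2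
    ring
  rw [Real.inv_rpow hlp.le] at hF
  have hpow : lam ^ (α - 2) = lam ^ α / lam ^ 2 := by
    rw [Real.rpow_sub hlp]; norm_num
  calc min 1 M⁻¹ * lam ^ (α - 2) * F1 ≤ M⁻¹ * lam ^ (α - 2) * (M * (lam ^ α)⁻¹ * (lam ^ 2 * F2)) := by
        gcongr
        exact min_le_right _ _
    _ = F2 := by rw [hpow]; field_simp
end
end
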